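/- Fix m > 0 and let u*(x) := max(√(2m) − x, 0) for x ≥ 0. Then for every nonnegative measurable function u : (0,∞) → ℝ with u ∈ L²((0,∞)), x ↦ x·u(x) ∈ L¹((0,∞)), and ∫_0^∞ u(x) dx = m, the Lyapunov functional 𝔏(u) := ½ ∫_0^∞ (u(x)² + 2x·u(x)) dx satisfies 𝔏(u) ≥ 𝔏(u*), with equality if and only if u = u* almost everywhere; i.e., u* is the unique minimizer of 𝔏 over the admissible class with mass m. -/

import Mathlib

open MeasureTheory Set

/-- The Lyapunov functional `𝔏(u) = ½ ∫_0^∞ (u² + 2 x u) dx`. -/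
noncomputable def mancalaLyapunov (u : ℝ → ℝ) : ℝ :=
  (1 / 2) * ∫ x in Set.Ioi (0 : ℝ), (u x ^ 2 + 2 * x * u x)

/-- The stationary profile `u*(x) = max(√(2m) − x, 0)`. -/
noncomputable def mancalaStationary (m : ℝ) : ℝ → ℝ :=
  fun x => max (Real.sqrt (2 * m) - x) 0


lemma mancala_aux_int (a : ℝ) (ha : 0 ≤ a) (g : ℝ → ℝ) (hg : Continuous g)
    (h0 : ∀ x, a < x → g x = 0) : Integrable g (volume.restrict (Set.Ioi (0 : ℝ))) := by
  change IntegrableOn g (Set.Ioi (0 : ℝ)) volume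
  rw [← Set.Ioc_union_Ioi_eq_Ioi ha]
  refine IntegrableOn.union (hg.integrableOn_Ioc) ?_
  exact (integrableOn_congr_fun (fun x hx => h0 x hx) measurableSet_Ioi).mpr integrableOn_zero

lemma mancala_aux_mass (m : ℝ) (hm : 0 < m) :
    ∫ x in Set.Ioi (0 : ℝ), mancalaStationary m x = m := by
  have ha : 0 ≤ Real.sqrt (2 * m) := Real.sqrt_nonneg _
  have hsq : Real.sqrt (2 * m) ^ 2 = 2 * m := Real.sq_sqrt (by linarith)
  have h1 : ∫ x in Set.Ioi (0 : ℝ), mancalaStationary m x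
      = ∫ x in Set.Ioc (0 : ℝ) (Real.sqrt (2 * m)), mancalaStationary m x := by
    refine (setIntegral_eq_of_subset_of_forall_sdiff_eq_zero measurableSet_Ioi
      Set.Ioc_subset_Ioi_self ?_)
    rintro x ⟨hx, hx'⟩
    have : Real.sqrt (2 * m) < x := by
      by_contra h
      exact hx' ⟨hx, not_lt.mp h⟩
    exact max_eq_right (by linarith)
  have h2 : ∫ x in Set.Ioc (0 : ℝ) (Real.sqrt (2 * m)), mancalaStationary m x
      = ∫ x in Set.Ioc (0 : ℝ) (Real.sqrt (2 * m)), (Real.sqrt (2 * m) - x) := by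
    refine setIntegral_congr_fun measurableSet_Ioc ?_
    intro x hx
    exact max_eq_left (by linarith [hx.2])
  rw [h1, h2, ← intervalIntegral.integral_of_le ha, intervalIntegral.integral_sub
    (by simp) (by simp)]
  generalize Real.sqrt (2 * m) = a at *
  simp only [intervalIntegral.integral_const, integral_id, smul_eq_mul]
  nlinarith

/-- `u*` is the unique minimizer of the Lyapunov functional over
nonnegative `u ∈ L²((0,∞))` with `x·u ∈ L¹((0,∞))` and mass `m`. -/
theorem mancala_Lyapunov_unique_minimizer
    (m : ℝ) (hm : 0 < m)
    (u : ℝ → ℝ)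
    (hu_nonneg : ∀ x ∈ Set.Ioi (0 : ℝ), 0 ≤ u x)
    (hu_L2 : MemLp u 2 (volume.restrict (Set.Ioi (0 : ℝ))))
    (hu_xL1 : Integrable (fun x => x * u x) (volume.restrict (Set.Ioi (0 : ℝ))))
    (hu_mass : ∫ x in Set.Ioi (0 : ℝ), u x = m) :
    mancalaLyapunov (mancalaStationary m) ≤ mancalaLyapunov u ∧
    (mancalaLyapunov u = mancalaLyapunov (mancalaStationary m) ↔
      u =ᵐ[volume.restrict (Set.Ioi (0 : ℝ))] mancalaStationary m) := by
  have hmass := mancala_aux_mass m hm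
  have ha : 0 ≤ Real.sqrt (2 * m) := Real.sqrt_nonneg _
  have hcont : Continuous (mancalaStationary m) := by
    unfold mancalaStationary; fun_prop
  have hzero : ∀ x, Real.sqrt (2 * m) < x → mancalaStationary m x = 0 :=
    fun x hx => max_eq_right (by linarith)
  have hpos : ∀ x, x ≤ Real.sqrt (2 * m) → mancalaStationary m x = Real.sqrt (2 * m) - x :=
    fun x hx => max_eq_left (by linarith)
  have hu1 : Integrable u (volume.restrict (Set.Ioi (0 : ℝ))) := by
    by_contra h
    rw [integral_undef h] at hu_mass
    linarith
  unfold mancalaLyapunov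
  generalize mancalaStationary m = s at *
  generalize Real.sqrt (2 * m) = a at *
  have hs1 := mancala_aux_int a ha s hcont hzero
  have hs2 := mancala_aux_int a ha (fun x => s x ^ 2) (by fun_prop)
    (fun x hx => by simp [hzero x hx])
  have hsx := mancala_aux_int a ha (fun x => x * s x) (by fun_prop)
    (fun x hx => by simp [hzero x hx])
  have hsL2 : MemLp s 2 (volume.restrict (Set.Ioi (0 : ℝ))) :=
    (memLp_two_iff_integrable_sq hs1.aestronglyMeasurable).mpr hs2
  have hu2 := hu_L2.integrable_sq
  have hd2 : Integrable (fun x => (u x - s x) ^ 2) (volume.restrict (Set.Ioi (0 : ℝ))) :=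
    (hu_L2.sub hsL2).integrable_sq
  have hFu : Integrable (fun x => u x ^ 2 + 2 * x * u x) (volume.restrict (Set.Ioi (0 : ℝ))) := by
    refine (hu2.add (hu_xL1.const_mul 2)).congr (Filter.Eventually.of_forall fun x => ?_)
    simp only [Pi.add_apply]; ring
  have hFs : Integrable (fun x => s x ^ 2 + 2 * x * s x) (volume.restrict (Set.Ioi (0 : ℝ))) := by
    refine (hs2.add (hsx.const_mul 2)).congr (Filter.Eventually.of_forall fun x => ?_)
    simp only [Pi.add_apply]; ring
  have hd1 : Integrable (fun x => 2 * a * (u x - s x)) (volume.restrict (Set.Ioi (0 : ℝ))) :=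
    (hu1.sub hs1).const_mul _
  have key : (∫ x in Set.Ioi (0 : ℝ), ((u x - s x) ^ 2 + (s x ^ 2 + 2 * x * s x)))
      ≤ ∫ x in Set.Ioi (0 : ℝ), ((u x ^ 2 + 2 * x * u x) - 2 * a * (u x - s x)) := by
    refine setIntegral_mono_on (hd2.add hFs) (hFu.sub hd1)
      measurableSet_Ioi ?_
    intro x hx
    rcases le_or_gt x a with h | h
    · rw [hpos x h]; apply le_of_eq; ring
    · rw [hzero x h]; nlinarith [hu_nonneg x hx]
  rw [integral_add hd2 hFs, integral_sub hFu hd1,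
    integral_const_mul, integral_sub hu1 hs1, hu_mass, hmass] at key
  have hn : 0 ≤ ∫ x in Set.Ioi (0 : ℝ), (u x - s x) ^ 2 :=
    integral_nonneg fun x => sq_nonneg _
  refine ⟨by linarith, fun h => ?_, fun h => ?_⟩
  · have h0 : ∫ x in Set.Ioi (0 : ℝ), (u x - s x) ^ 2 = 0 := by linarith
    rw [integral_eq_zero_iff_of_nonneg (fun x => sq_nonneg _) hd2] at h0
    filter_upwards [h0] with x hx
    have : u x - s x = 0 := by simpa using hx
    linarith
  · congr 1
    refine integral_congr_ae ?_
    filter_upwards [h] with x hx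
    rw [hx]
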